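/- Let k be real with |k| < 1 and ε real, and define β(α) = arctan( k·sin(α − ε) / (1 − k·cos(α − ε)) ). Then for every real α, sin(β(α)) = k·sin(α + β(α) − ε); that is, setting θ = α + β(α), the centric and ex-centric variables satisfy the inversion relation β = arcsin(k·sin(θ − ε)), so that α = θ − arcsin(k·sin(θ − ε)). -/

import Mathlib

open Real

/-- The angle `β` by which the ex-centric variable of an ex-center `E(k, ε)` exceeds the centric
variable `α`. It depends on `α` and `ε` only through `φ = α - ε`, which is taken as the argument.
Where `k * cos φ = 1`, division by zero makes the value `0`. -/
noncomputable def excentricAngle (k φ : ℝ) : ℝ :=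
  arctan (k * sin φ / (1 - k * cos φ))

lemma sin_eq_mul_sin_add_iff {k φ b : ℝ} (hφ : k * cos φ ≠ 1) (hb : cos b ≠ 0) :
    sin b = k * sin (φ + b) ↔ tan b = k * sin φ / (1 - k * cos φ) := by
  rw [tan_eq_sin_div_cos, div_eq_div_iff hb (sub_ne_zero.mpr hφ.symm), sin_add]
  constructor <;> intro h <;> linarith

lemma sin_excentricAngle {k φ : ℝ} (hφ : k * cos φ ≠ 1) :
    sin (excentricAngle k φ) = k * sin (φ + excentricAngle k φ) :=
  (sin_eq_mul_sin_add_iff hφ (cos_arctan_pos _).ne').mpr (tan_arctan _)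

lemma arcsin_mul_sin_add_excentricAngle {k φ : ℝ} (hφ : k * cos φ ≠ 1) :
    arcsin (k * sin (φ + excentricAngle k φ)) = excentricAngle k φ := by
  rw [← sin_excentricAngle hφ]
  exact arcsin_sin (neg_pi_div_two_lt_arctan _).le (arctan_lt_pi_div_two _).le

lemma mul_cos_lt_one {k : ℝ} (hk : |k| < 1) (φ : ℝ) : k * cos φ < 1 :=
  calc
    k * cos φ ≤ |k| * |cos φ| := (le_abs_self _).trans_eq (abs_mul k (cos φ))
    _ ≤ |k| := mul_le_of_le_one_right (abs_nonneg k) (abs_cos_le_one φ)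
    _ < 1 := hk

theorem inversion_relation_general {k ε α : ℝ} (h : k * cos (α - ε) ≠ 1) :
    sin (excentricAngle k (α - ε)) = k * sin (α + excentricAngle k (α - ε) - ε) ∧
      α = α + excentricAngle k (α - ε) -
        arcsin (k * sin (α + excentricAngle k (α - ε) - ε)) := by
  rw [add_sub_right_comm α _ ε, arcsin_mul_sin_add_excentricAngle h]
  exact ⟨sin_excentricAngle h, (add_sub_cancel_right _ _).symm⟩

theorem inversion_relation (k ε : ℝ) (hk : |k| < 1) (α : ℝ) :
    Real.sin (Real.arctan (k * Real.sin (α - ε) / (1 - k * Real.cos (α - ε)))) =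
      k * Real.sin (α + Real.arctan (k * Real.sin (α - ε) / (1 - k * Real.cos (α - ε))) - ε) ∧
    α = (α + Real.arctan (k * Real.sin (α - ε) / (1 - k * Real.cos (α - ε)))) -
      Real.arcsin (k * Real.sin
        ((α + Real.arctan (k * Real.sin (α - ε) / (1 - k * Real.cos (α - ε)))) - ε)) :=
  inversion_relation_general (mul_cos_lt_one hk (α - ε)).ne
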